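/- Fix a real α > 2, a real β > 0, and a natural number m ≥ 1. Then there exist constants c > 0 and y₀ > 2, depending only on m, α, β, such that for every real y ≥ y₀ the iterated contour integral I := (1/(2πi))^{2m} ∫_{(1/log y)^{2m}} [∏_{1≤i,j≤m} ζ^{β}(1 + z_i + z_{m+j})] · y^{z₁+⋯+z_{2m}} / (z₁^{α}⋯z_{2m}^{α}) dz₁⋯dz_{2m} — where each z_i runs over the vertical line Re(z_i) = 1/log y — is a real number and satisfies I ≥ c · (log y)^{γ}, where γ = 2mα + m²β − 2m. -/

import Mathlib

open Complex Finset MeasureTheory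

/-- `log ζ(s) = ∑_{n ≥ 2} Λ(n)/(log n · n^s)` for `Re s > 1`. -/
noncomputable def logZeta (s : ℂ) : ℂ :=
  ∑' n : ℕ, ((ArithmeticFunction.vonMangoldt n / Real.log n : ℝ) : ℂ) * (n : ℂ) ^ (-s)

/-- `ζ^β(s) = exp(β log ζ(s))` for real `β` and `Re s > 1`. -/
noncomputable def zetaPow (β : ℝ) (s : ℂ) : ℂ := Complex.exp ((β : ℂ) * logZeta s)

noncomputable def bC : ArithmeticFunction ℂ :=
  ⟨fun n => ((ArithmeticFunction.vonMangoldt n / Real.log n : ℝ) : ℂ), by simp⟩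

lemma bC_apply (n : ℕ) : bC n = ((ArithmeticFunction.vonMangoldt n / Real.log n : ℝ) : ℂ) := rfl

lemma logZeta_eq (s : ℂ) : logZeta s = LSeries (fun n => bC n) s := by
  unfold logZeta LSeries
  congr 1
  ext n
  rw [LSeries.term_def]
  split_ifs with h
  · simp [h]
  · rw [bC_apply, Complex.cpow_neg, ← div_eq_mul_inv]

lemma bC_bound (n : ℕ) : ‖bC n‖ ≤ 1 := by
  rw [bC_apply, Complex.norm_real, Real.norm_of_nonneg
    (div_nonneg ArithmeticFunction.vonMangoldt_nonneg (Real.log_natCast_nonneg n))]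
  exact div_le_one_of_le₀ ArithmeticFunction.vonMangoldt_le_log (Real.log_natCast_nonneg n)

lemma bC_summable {s : ℂ} (hs : 1 < s.re) : LSeriesSummable (fun n => bC n) s :=
  LSeriesSummable_of_bounded_of_one_lt_re (m := 1) (fun n _ => bC_bound n) hs

lemma bC_logMul : LSeries.logMul (fun n => bC n) =
    fun n => ((ArithmeticFunction.vonMangoldt n : ℝ) : ℂ) := by
  ext n
  simp only [LSeries.logMul, bC_apply]
  by_cases h : Real.log n = 0
  · have h2 : ArithmeticFunction.vonMangoldt n = 0 :=
      le_antisymm (h ▸ ArithmeticFunction.vonMangoldt_le_log) ArithmeticFunction.vonMangoldt_nonneg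
    simp [h2]
  · rw [← Complex.natCast_log]
    norm_cast
    field_simp

lemma logZeta_hasDeriv {s : ℂ} (hs : 1 < s.re) :
    HasDerivAt logZeta (deriv riemannZeta s / riemannZeta s) s := by
  have h : LSeries.abscissaOfAbsConv (fun n => bC n) < s.re :=
    lt_of_le_of_lt (LSeries.abscissaOfAbsConv_le_of_le_const ⟨1, fun n _ => bC_bound n⟩)
      (by exact_mod_cast hs)
  have := LSeries_hasDerivAt h
  rw [bC_logMul, ArithmeticFunction.LSeries_vonMangoldt_eq_deriv_riemannZeta_div hs] at this
  rw [funext logZeta_eq]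
  convert this using 1
  ring

lemma exp_logZeta : ∃ C : ℂ, C ≠ 0 ∧ ∀ s : ℂ, 1 < s.re →
    Complex.exp (logZeta s) = C * riemannZeta s := by
  have hopen : IsOpen {w : ℂ | 1 < w.re} := isOpen_lt continuous_const Complex.continuous_re
  have hd : ∀ s : ℂ, 1 < s.re →
      HasDerivAt (fun s => riemannZeta s * Complex.exp (-logZeta s)) 0 s := by
    intro s hs
    have hne := riemannZeta_ne_zero_of_one_lt_re hs
    have h1 : HasDerivAt riemannZeta (deriv riemannZeta s) s :=
      (differentiableAt_riemannZeta (by rintro rfl; simp at hs)).hasDerivAt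
    refine (h1.mul (logZeta_hasDeriv hs).neg.cexp).congr_deriv ?_
    field_simp
    simp
  obtain ⟨a, ha⟩ := hopen.exists_is_const_of_deriv_eq_zero
    (convex_halfSpace_re_gt 1).isPreconnected
    (fun s hs => (hd s hs).differentiableAt.differentiableWithinAt) (fun s hs => (hd s hs).deriv)
  have h2 : (1:ℝ) < (2:ℂ).re := by norm_num
  have ha0 : a ≠ 0 := by
    rw [← ha 2 h2]
    exact mul_ne_zero (riemannZeta_ne_zero_of_one_lt_re h2) (Complex.exp_ne_zero _)
  refine ⟨a⁻¹, inv_ne_zero ha0, fun s hs => ?_⟩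
  have := ha s hs
  rw [Complex.exp_neg] at this
  rw [← this]
  have hne := riemannZeta_ne_zero_of_one_lt_re hs
  field_simp [Complex.exp_ne_zero]

lemma zetaPow_norm (β : ℝ) (s : ℂ) : ‖zetaPow β s‖ = ‖Complex.exp (logZeta s)‖ ^ β := by
  rw [zetaPow, Complex.norm_exp, Complex.norm_exp, ← Real.exp_mul]
  congr 1
  simp [mul_comm]

lemma zetaPow_asymp (β : ℝ) : ∃ A : ℝ, 0 < A ∧
    Filter.Tendsto (fun σ : ℝ => σ ^ β * ‖zetaPow β (1 + σ)‖) (nhdsWithin 0 (Set.Ioi 0)) (nhds A) := by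
  obtain ⟨C, hC, h⟩ := exp_logZeta
  refine ⟨‖C‖ ^ β, by positivity, ?_⟩
  have ht : Filter.Tendsto (fun x : ℝ => (1 + x : ℂ)) (nhdsWithin 0 (Set.Ioi 0))
      (nhdsWithin 1 {1}ᶜ) := by
    refine tendsto_nhdsWithin_iff.2 ⟨?_, ?_⟩
    · have : Filter.Tendsto (fun x : ℝ => (1 + x : ℂ)) (nhds 0) (nhds (1 + (0:ℝ))) :=
        (by fun_prop : Continuous (fun x : ℝ => (1 + x : ℂ))).continuousAt
      simpa using this.mono_left nhdsWithin_le_nhds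
    · filter_upwards [self_mem_nhdsWithin] with x hx
      simpa using (ne_of_gt hx)
  have h1 := ((riemannZeta_residue_one.comp ht).norm.const_mul ‖C‖).rpow_const (p := β)
    (Or.inl (by simpa using hC))
  simp only [norm_one, mul_one] at h1
  refine h1.congr' ?_
  filter_upwards [self_mem_nhdsWithin] with x hx
  have hx : 0 < x := hx
  rw [zetaPow_norm, h _ (by simpa using hx), ← Real.mul_rpow hx.le (norm_nonneg _)]
  congr 1
  simp [abs_of_pos hx]
  ring

open ComplexOrder in
lemma bC_pow_nonneg (k n : ℕ) : 0 ≤ (bC ^ k) n := by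
  induction k generalizing n with
  | zero =>
    rw [pow_zero, ArithmeticFunction.one_apply]
    split_ifs <;> simp
  | succ k ih =>
    rw [pow_succ, ArithmeticFunction.mul_apply]
    refine Finset.sum_nonneg fun x _ => mul_nonneg (ih _) ?_
    rw [bC_apply]
    exact_mod_cast (div_nonneg ArithmeticFunction.vonMangoldt_nonneg (Real.log_natCast_nonneg _))

lemma bC_pow_L (k : ℕ) {s : ℂ} (hs : 1 < s.re) : LSeriesSummable (fun n => (bC ^ k) n) s ∧
    LSeries (fun n => (bC ^ k) n) s = logZeta s ^ k := by
  induction k with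
  | zero =>
    simp only [pow_zero]
    rw [ArithmeticFunction.one_eq_delta, LSeries_delta]
    refine ⟨?_, rfl⟩
    exact LSeriesSummable_of_bounded_of_one_lt_re (m := 1)
      (fun n _ => by simp only [LSeries.delta]; split_ifs <;> simp) hs
  | succ k ih =>
    simp only [pow_succ]
    exact ⟨ArithmeticFunction.LSeriesSummable_mul ih.1 (bC_summable hs), by
      rw [ArithmeticFunction.LSeries_mul' ih.1 (bC_summable hs), ih.2, logZeta_eq]⟩

lemma zetaPow_series {β : ℝ} (hβ : 0 < β) : ∃ (a : ℕ × ℕ → ℝ) (L : ℕ × ℕ → ℝ),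
    (∀ p, 0 ≤ a p) ∧ (∀ p, 0 ≤ L p) ∧ ∀ s : ℂ, 1 < s.re →
      HasSum (fun p => (a p : ℂ) * Complex.exp (-s * L p)) (zetaPow β s) := by
  have hre : ∀ k n, (((bC ^ k) n).re : ℂ) = (bC ^ k) n := fun k n => by
    have := Complex.nonneg_iff.1 (bC_pow_nonneg k n)
    apply Complex.ext <;> simp [this.2]
  have hre0 : ∀ k n, 0 ≤ ((bC ^ k) n).re := fun k n => (Complex.nonneg_iff.1 (bC_pow_nonneg k n)).1
  have hterm : ∀ (k n : ℕ) (s : ℂ), (((β ^ k / k.factorial * ((bC ^ k) n).re : ℝ)) : ℂ) *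
      Complex.exp (-s * (Real.log n : ℝ)) =
      (β ^ k / k.factorial : ℂ) * LSeries.term (fun n => (bC ^ k) n) s n := by
    intro k n s
    push_cast
    rw [hre, LSeries.term_def]
    split_ifs with h
    · simp [h]
    · rw [div_eq_mul_inv ((bC ^ k) n), ← Complex.cpow_neg, Complex.cpow_def_of_ne_zero
        (by exact_mod_cast h)]
      rw [mul_comm (-s)]
      ring
  refine ⟨fun p => β ^ p.1 / p.1.factorial * ((bC ^ p.1) p.2).re, fun p => Real.log p.2,
    fun p => mul_nonneg (by positivity) (hre0 _ _), fun p => Real.log_natCast_nonneg _, ?_⟩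
  intro s hs
  have hfib : ∀ (s : ℂ), 1 < s.re → ∀ k : ℕ, HasSum (fun n : ℕ =>
      (((β ^ k / k.factorial * ((bC ^ k) n).re : ℝ)) : ℂ) *
      Complex.exp (-s * (Real.log n : ℝ))) ((β * logZeta s) ^ k / k.factorial) := by
    intro s hs k
    simp_rw [hterm]
    have := ((bC_pow_L k hs).1.hasSum).mul_left (β ^ k / k.factorial : ℂ)
    have h2 := (bC_pow_L k hs).2
    rw [LSeries] at h2
    rw [h2] at this
    rwa [mul_pow, mul_div_right_comm]
  have hnorm : ∀ (k n : ℕ), ‖(((β ^ k / k.factorial * ((bC ^ k) n).re : ℝ)) : ℂ) *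
      Complex.exp (-s * (Real.log n : ℝ))‖ =
      ((((β ^ k / k.factorial * ((bC ^ k) n).re : ℝ)) : ℂ) *
      Complex.exp (-(s.re : ℂ) * (Real.log n : ℝ))).re := by
    intro k n
    rw [norm_mul, Complex.norm_real, Real.norm_of_nonneg (mul_nonneg (by positivity) (hre0 _ _)),
      Complex.re_ofReal_mul, Complex.norm_exp, ← Complex.ofReal_neg, ← Complex.ofReal_mul,
      Complex.exp_ofReal_re, Complex.re_mul_ofReal, Complex.neg_re]
  have hsr : 1 < (s.re : ℂ).re := by simpa using hs
  have hnfib : ∀ k : ℕ, HasSum (fun n : ℕ =>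
      ‖(((β ^ k / k.factorial * ((bC ^ k) n).re : ℝ)) : ℂ) *
      Complex.exp (-s * (Real.log n : ℝ))‖) (((β * logZeta (s.re : ℂ)) ^ k / k.factorial).re) := by
    intro k
    simp_rw [hnorm]
    exact Complex.hasSum_re (hfib _ hsr k)
  have hsum : Summable (fun p : ℕ × ℕ =>
      (((β ^ p.1 / p.1.factorial * ((bC ^ p.1) p.2).re : ℝ)) : ℂ) *
      Complex.exp (-s * (Real.log p.2 : ℝ))) := by
    refine Summable.of_norm ?_
    refine (summable_prod_of_nonneg (fun _ => norm_nonneg _)).2 ⟨fun k => (hnfib k).summable, ?_⟩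
    simp_rw [(hnfib _).tsum_eq]
    have := NormedSpace.expSeries_div_summable (𝔸 := ℂ) (β * logZeta (s.re : ℂ))
    exact (Complex.hasSum_re this.hasSum).summable
  have h1 := hsum.hasSum.prod_fiberwise (hfib s hs)
  have h2 : HasSum (fun k : ℕ => (β * logZeta s) ^ k / (k.factorial : ℂ)) (zetaPow β s) := by
    rw [zetaPow, Complex.exp_eq_exp_ℂ]
    exact NormedSpace.expSeries_div_hasSum_exp _
  rw [← h1.unique h2]
  exact hsum.hasSum

lemma gammaInt_integrable {α r : ℝ} (hα : 0 < α) (hr : 0 < r) :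
    IntegrableOn (fun v : ℝ => v ^ (α - 1) * Real.exp (-r * v)) (Set.Ioi 0) := by
  have := integrableOn_rpow_mul_exp_neg_mul_rpow (p := 1) (s := α - 1) (b := r) (by linarith)
    one_pos hr
  simpa using this

lemma gammaC {α : ℝ} (hα : 0 < α) (z : ℂ) (hz : 0 < z.re) :
    ∫ v in Set.Ioi (0:ℝ), ((v ^ (α - 1) : ℝ) : ℂ) * Complex.exp (-z * v)
      = Complex.Gamma α * z ^ (-(α : ℂ)) := by
  set μ : Measure ℝ := (volume.restrict (Set.Ioi (0:ℝ))).withDensity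
    (fun v => ENNReal.ofReal (v ^ (α - 1))) with hμ
  have hmeas : Measurable (fun v : ℝ => ENNReal.ofReal (v ^ (α - 1))) := by fun_prop
  have hsub : ∀ t : ℝ, t < 0 → t ∈ interior (ProbabilityTheory.integrableExpSet id μ) := by
    have h1 : Set.Iio (0:ℝ) ⊆ ProbabilityTheory.integrableExpSet id μ := by
      intro t ht
      simp only [ProbabilityTheory.integrableExpSet, Set.mem_ofPred_eq, hμ]
      rw [integrable_withDensity_iff_integrable_smul' hmeas (by simp)]
      refine IntegrableOn.congr_fun (gammaInt_integrable hα (r := -t) (by simpa using ht)) ?_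
        measurableSet_Ioi
      intro v hv
      have hv' : (0:ℝ) ≤ v ^ (α - 1) := Real.rpow_nonneg (le_of_lt hv) _
      simp [ENNReal.toReal_ofReal hv']
    intro t ht
    exact interior_mono h1 (by rw [isOpen_Iio.interior_eq]; exact ht)
  have hval : ∀ w : ℂ, ProbabilityTheory.complexMGF id μ (-w) =
      ∫ v in Set.Ioi (0:ℝ), ((v ^ (α - 1) : ℝ) : ℂ) * Complex.exp (-w * v) := by
    intro w
    rw [ProbabilityTheory.complexMGF, hμ,
      integral_withDensity_eq_integral_toReal_smul hmeas (by simp)]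
    refine setIntegral_congr_fun measurableSet_Ioi ?_
    intro v hv
    have hv' : (0:ℝ) ≤ v ^ (α - 1) := Real.rpow_nonneg (le_of_lt hv) _
    simp [ENNReal.toReal_ofReal hv']
  rw [← hval]
  have hopen : IsOpen {w : ℂ | 0 < w.re} := isOpen_lt continuous_const Complex.continuous_re
  have key : Set.EqOn (fun w : ℂ => ProbabilityTheory.complexMGF id μ (-w))
      (fun w => Complex.Gamma α * w ^ (-(α : ℂ))) {w : ℂ | 0 < w.re} := by
    refine AnalyticOnNhd.eqOn_of_preconnected_of_frequently_eq (z₀ := 1) ?_ ?_ ?_ ?_ ?_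
    · refine DifferentiableOn.analyticOnNhd ?_ hopen
      intro w hw
      have hw : 0 < w.re := hw
      have := (ProbabilityTheory.hasDerivAt_complexMGF (X := id) (μ := μ) (z := -w)
        (hsub _ (by simpa using hw))).differentiableAt
      exact (this.comp w differentiableAt_id.neg).differentiableWithinAt
    · refine DifferentiableOn.analyticOnNhd ?_ hopen
      intro w hw
      refine (DifferentiableAt.const_mul ?_ _).differentiableWithinAt
      exact differentiableAt_id.cpow_const (Or.inl hw)
    · exact (convex_halfSpace_re_gt 0).isPreconnected
    · simp
    · have ht : Filter.Tendsto (fun x : ℝ => (x : ℂ)) (nhdsWithin 1 {1}ᶜ) (nhdsWithin 1 {1}ᶜ) := by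
        refine tendsto_nhdsWithin_iff.2 ⟨?_, ?_⟩
        · have : Filter.Tendsto (fun x : ℝ => (x : ℂ)) (nhds 1) (nhds ((1:ℝ):ℂ)) :=
            Complex.continuous_ofReal.continuousAt
          simpa using this.mono_left nhdsWithin_le_nhds
        · filter_upwards [self_mem_nhdsWithin] with x hx
          simpa using hx
      refine ht.frequently (Filter.Eventually.frequently ?_)
      filter_upwards [nhdsWithin_le_nhds (lt_mem_nhds (zero_lt_one (α := ℝ)))] with r hr
      rw [hval]
      have := Complex.integral_cpow_mul_exp_neg_mul_Ioi (a := α) (r := r) (by simpa using hα) hr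
      rw [mul_comm, Complex.cpow_neg, ← Complex.inv_cpow _ _ (by
        rw [Complex.arg_ofReal_of_nonneg hr.le]; exact Real.pi_pos.ne), ← one_div, ← this]
      refine setIntegral_congr_fun measurableSet_Ioi ?_
      intro v hv
      simp [Complex.ofReal_cpow (le_of_lt hv)]
  exact key hz

noncomputable def gfun (α δ v : ℝ) : ℝ :=
  if 0 < v then v ^ (α - 1) * Real.exp (-δ * v) else 0

lemma gfun_nonneg (α δ v : ℝ) : 0 ≤ gfun α δ v := by
  unfold gfun
  split_ifs with h
  · positivity
  · rfl

lemma gfun_cont {α δ : ℝ} (hα : 1 < α) : Continuous (gfun α δ) := by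
  have : gfun α δ = fun v => (max v 0) ^ (α - 1) * Real.exp (-δ * v) := by
    ext v
    unfold gfun
    split_ifs with h
    · rw [max_eq_left h.le]
    · rw [max_eq_right (not_lt.1 h), Real.zero_rpow (by linarith), zero_mul]
  rw [this]
  exact ((continuous_id.max continuous_const).rpow_const (fun _ => Or.inr (by linarith))).mul
    (by fun_prop)

lemma gfun_eq_ind (α δ : ℝ) : gfun α δ =
    (Set.Ioi (0:ℝ)).indicator (fun v => v ^ (α - 1) * Real.exp (-δ * v)) := by
  ext v; simp [gfun, Set.indicator]

lemma wint {α δ : ℝ} (hα : 1 < α) (hδ : 0 < δ) :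
    Integrable (fun t : ℝ => ((δ : ℂ) + t * I) ^ (-(α : ℂ))) := by
  have h := integrable_rpow_neg_one_add_norm_sq (E := ℝ) (μ := volume) (r := α) (by simpa using hα)
  have h2 := (h.comp_mul_left' (R := δ⁻¹) (by positivity)).const_mul (δ ^ (-α))
  refine h2.mono' ?_ ?_
  · refine Continuous.aestronglyMeasurable ?_
    refine continuous_iff_continuousAt.2 fun t => ?_
    refine ContinuousAt.cpow (by fun_prop) continuousAt_const ?_
    left; simpa using hδ
  · refine Filter.Eventually.of_forall fun t => ?_
    have hpos : (0:ℝ) ≤ 1 + ‖δ⁻¹ * t‖ ^ 2 := by positivity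
    rw [← ofReal_neg, Complex.norm_cpow_real, Complex.norm_add_mul_I]
    have h5 : δ ^ 2 + t ^ 2 = δ ^ 2 * (1 + ‖δ⁻¹ * t‖ ^ 2) := by
      rw [Real.norm_eq_abs, sq_abs]
      field_simp
    rw [h5, Real.sqrt_mul (by positivity), Real.sqrt_sq hδ.le,
      Real.mul_rpow hδ.le (Real.sqrt_nonneg _), Real.sqrt_eq_rpow, ← Real.rpow_mul hpos]
    apply le_of_eq
    congr 2
    ring

lemma ginv {α δ : ℝ} (hα : 1 < α) (hδ : 0 < δ) (v : ℝ) :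
    ∫ t : ℝ, Complex.exp ((t * v : ℝ) * I) * ((δ : ℂ) + t * I) ^ (-(α : ℂ))
      = ((2 * Real.pi / Real.Gamma α * gfun α δ v : ℝ) : ℂ) := by
  have hG : Real.Gamma α ≠ 0 := (Real.Gamma_pos_of_pos (by linarith)).ne'
  have hF : ∀ w : ℝ, FourierTransform.fourier (fun v => (gfun α δ v : ℂ)) w
      = Real.Gamma α * ((δ : ℂ) + ((2 * Real.pi) * w : ℝ) * I) ^ (-(α : ℂ)) := by
    intro w
    rw [Real.fourier_eq', ← Complex.Gamma_ofReal, ← gammaC (by linarith) _ (by simpa using hδ),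
      ← integral_indicator measurableSet_Ioi]
    congr 1
    ext v
    simp only [gfun, Set.indicator, Set.mem_Ioi]
    split_ifs with h
    · push_cast
      rw [smul_eq_mul, mul_left_comm, ← Complex.exp_add]
      congr 2
      simp
      ring
    · simp
  have hint : Integrable (fun v => (gfun α δ v : ℂ)) := by
    have : Integrable (gfun α δ) := by
      rw [gfun_eq_ind, integrable_indicator_iff measurableSet_Ioi]
      exact gammaInt_integrable (by linarith) hδ
    exact this.ofReal
  have hcont : Continuous (fun v => (gfun α δ v : ℂ)) :=
    Complex.continuous_ofReal.comp (gfun_cont hα)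
  have hint2 : Integrable (FourierTransform.fourier (fun v => (gfun α δ v : ℂ))) := by
    rw [funext hF]
    exact ((wint hα hδ).comp_mul_left' (R := 2 * Real.pi) (by positivity)).const_mul _
  have := congrFun (hcont.fourierInv_fourier_eq hint hint2) v
  rw [Real.fourierInv_eq'] at this
  simp_rw [hF] at this
  have h3 := Measure.integral_comp_mul_left
    (fun t : ℝ => Complex.exp ((t * v : ℝ) * I) * (Real.Gamma α * ((δ : ℂ) + t * I) ^ (-(α : ℂ))))
    (2 * Real.pi)
  have h4 : ∀ x : ℝ, 2 * Real.pi * inner ℝ x v = 2 * Real.pi * x * v := by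
    intro x; simp; ring
  simp_rw [h4, smul_eq_mul] at this
  rw [this] at h3
  simp_rw [mul_left_comm _ (Real.Gamma α : ℂ)] at h3
  rw [integral_const_mul, abs_of_pos (by positivity)] at h3
  have hG' : (Real.Gamma α : ℂ) ≠ 0 := by exact_mod_cast hG
  have hp : (Real.pi : ℂ) ≠ 0 := by exact_mod_cast Real.pi_ne_zero
  rw [Complex.real_smul] at h3
  push_cast at h3 ⊢
  rw [h3]
  generalize (∫ a : ℝ, _ : ℂ) = X
  field_simp

lemma exists_measure {β : ℝ} (hβ : 0 < β) (M : ℝ) (hM : 0 < M) :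
    ∃ c D : ℝ, 0 < c ∧ 0 < D ∧ ∀ δ : ℝ, 0 < δ → δ < D → ∃ μ : Measure ℝ, IsFiniteMeasure μ ∧
      (∀ t : ℝ, ∫ u, Complex.exp (((-(t * u) : ℝ) : ℂ) * I) ∂μ
        = zetaPow β (1 + 2 * δ + t * I)) ∧
      c * (1 / δ) ^ β ≤ μ.real (Set.Icc 0 (1 / (M * δ))) := by
  obtain ⟨a, L, ha, hL, hser⟩ := zetaPow_series hβ
  obtain ⟨A, hA, hlim⟩ := zetaPow_asymp β
  have hF : ∀ σ : ℝ, 0 < σ →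
      HasSum (fun p => a p * Real.exp (-(1 + σ) * L p)) ‖zetaPow β (1 + σ)‖ := by
    intro σ hσ
    have h0 := hser (1 + σ) (by simpa using hσ)
    have heq : (fun p => (a p : ℂ) * Complex.exp (-(1 + (σ : ℂ)) * L p)) =
        fun p => ((a p * Real.exp (-(1 + σ) * L p) : ℝ) : ℂ) := by
      ext p; push_cast; rfl
    rw [heq] at h0
    have h1 : HasSum (fun p => a p * Real.exp (-(1 + σ) * L p)) (zetaPow β (1 + σ)).re := by
      simpa only [Complex.ofReal_re] using Complex.hasSum_re h0
    have h2 := h0.unique (Complex.hasSum_ofReal.2 h1)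
    have h3 : 0 ≤ (zetaPow β (1 + σ)).re :=
      h1.nonneg (fun p => mul_nonneg (ha p) (Real.exp_pos _).le)
    have h4 : ‖zetaPow β (1 + σ)‖ = (zetaPow β (1 + σ)).re := by
      conv_lhs => rw [h2]
      rw [Complex.norm_real, Real.norm_of_nonneg h3]
    rwa [h4]
  have hev := (hlim.eventually (lt_mem_nhds (half_lt_self hA))).and
    (hlim.eventually (gt_mem_nhds (by linarith : A < 2 * A)))
  obtain ⟨η, hη, hη2⟩ := mem_nhdsGT_iff_exists_Ioo_subset.1 hev
  have hη : 0 < η := hη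
  -- choose K
  obtain ⟨K, hK2, hK⟩ : ∃ K : ℝ, 2 ≤ K ∧ Real.exp (-(K / (2 * M))) * (2 * A * 2 ^ β) ≤ A / 4 := by
    have ht : Filter.Tendsto (fun K : ℝ => Real.exp (-(K / (2 * M))) * (2 * A * 2 ^ β))
        Filter.atTop (nhds 0) := by
      have : Filter.Tendsto (fun K : ℝ => Real.exp (-(K / (2 * M)))) Filter.atTop (nhds 0) :=
        Real.tendsto_exp_neg_atTop_nhds_zero.comp
          (Filter.tendsto_id.atTop_div_const (by positivity))
      simpa using this.mul_const (2 * A * 2 ^ β)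
    have h1 := ht.eventually (gt_mem_nhds (by positivity : 0 < A / 4))
    obtain ⟨K, h1, h2⟩ := (h1.and (Filter.eventually_ge_atTop 2)).exists
    exact ⟨K, h2, h1.le⟩
  have hK0 : 0 < K := by linarith
  refine ⟨A / 4 * K ^ (-β), η / K, by positivity, by positivity, ?_⟩
  intro δ hδ hδD
  set w : ℕ × ℕ → ℝ := fun p => a p * Real.exp (-(1 + 2 * δ) * L p) with hw
  have hw0 : ∀ p, 0 ≤ w p := fun p => mul_nonneg (ha p) (Real.exp_pos _).le
  have hws : Summable w := (hF (2 * δ) (by positivity)).summable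
  set μ : Measure ℝ := Measure.sum (fun p => ENNReal.ofReal (w p) • Measure.dirac (L p)) with hμ
  have hfin : IsFiniteMeasure μ := by
    constructor
    rw [hμ, Measure.sum_apply _ MeasurableSet.univ]
    simp only [Measure.smul_apply, measure_univ, smul_eq_mul, mul_one]
    rw [← ENNReal.ofReal_tsum_of_nonneg hw0 hws]
    exact ENNReal.ofReal_lt_top
  refine ⟨μ, hfin, ?_, ?_⟩
  · intro t
    have hint : Integrable (fun u : ℝ => Complex.exp (((-(t * u) : ℝ) : ℂ) * I)) μ := by
      refine Integrable.of_bound (C := 1) (Continuous.aestronglyMeasurable (by fun_prop)) ?_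
      refine Filter.Eventually.of_forall fun u => ?_
      rw [Complex.norm_exp_ofReal_mul_I]
    have h1 := hasSum_integral_measure hint
    have h2 := hser (1 + 2 * δ + t * I) (by simpa using hδ)
    refine h1.unique ?_
    convert! h2 using 2 with p
    rw [integral_smul_measure, integral_dirac, ENNReal.toReal_ofReal (hw0 p), hw,
      Complex.real_smul]
    push_cast
    rw [mul_assoc, ← Complex.exp_add]
    congr 2
    ring
  · set X := 1 / (M * δ) with hX
    have hind : Integrable ((Set.Icc 0 X).indicator (fun _ : ℝ => (1:ℝ))) μ :=
      (integrable_const 1).indicator measurableSet_Icc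
    have h1 := hasSum_integral_measure hind
    rw [← hμ, integral_indicator_const _ measurableSet_Icc, smul_eq_mul, mul_one] at h1
    set σ := K * δ with hσ
    have hσ0 : 0 < σ := by positivity
    have hση : σ < η := by rw [hσ, mul_comm]; exact (lt_div_iff₀ hK0).1 hδD
    have h2 := (hF σ hσ0).sub ((hF (σ / 2) (by positivity)).mul_left (Real.exp (-(σ * X / 2))))
    have h3 : ‖zetaPow β (1 + σ)‖ - Real.exp (-(σ * X / 2)) * ‖zetaPow β (1 + (σ / 2 : ℝ))‖
        ≤ μ.real (Set.Icc 0 X) := by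
      refine hasSum_le (fun p => ?_) h2 h1
      rw [integral_smul_measure, integral_dirac, ENNReal.toReal_ofReal (hw0 p), smul_eq_mul, hw]
      simp only [Set.indicator, Set.mem_Icc]
      have hap := ha p
      have hLp := hL p
      split_ifs with hc
      · have e1 : Real.exp (-(1 + σ) * L p) ≤ Real.exp (-(1 + 2 * δ) * L p) := by
          apply Real.exp_le_exp.2
          have : 2 * δ ≤ σ := by rw [hσ]; gcongr
          nlinarith
        have e2 := mul_le_mul_of_nonneg_left e1 hap
        have e3 : 0 ≤ Real.exp (-(σ * X / 2)) * (a p * Real.exp (-(1 + σ / 2) * L p)) := by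
          positivity
        linarith
      · have hc' : X < L p := by
          by_contra hcon
          exact hc ⟨hLp, not_lt.1 hcon⟩
        have e1 : Real.exp (-(1 + σ) * L p) ≤
            Real.exp (-(σ * X / 2)) * Real.exp (-(1 + σ / 2) * L p) := by
          rw [← Real.exp_add]
          apply Real.exp_le_exp.2
          nlinarith
        have e2 := mul_le_mul_of_nonneg_left e1 hap
        linarith [mul_left_comm (Real.exp (-(σ * X / 2))) (a p) (Real.exp (-(1 + σ / 2) * L p))]
    refine le_trans ?_ h3
    have b1 := (hη2 ⟨hσ0, hση⟩).1
    have b2 := (hη2 (a := σ / 2) ⟨by positivity, by linarith⟩).2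
    have hsX : σ * X / 2 = K / (2 * M) := by
      rw [hσ, hX]; field_simp
    rw [hsX]
    have hσb : 0 < σ ^ β := by positivity
    rw [Real.div_rpow hσ0.le (by norm_num)] at b2
    have h2b : (0:ℝ) < 2 ^ β := by positivity
    have b3 : σ ^ β * ‖zetaPow β (1 + (σ / 2 : ℝ))‖ ≤ 2 * A * 2 ^ β := by
      rw [div_mul_eq_mul_div, div_lt_iff₀ h2b] at b2
      exact b2.le
    have hE := Real.exp_pos (-(K / (2 * M)))
    have b4 := mul_le_mul_of_nonneg_left b3 hE.le
    have b5 : A / 4 ≤ σ ^ β * (‖zetaPow β (1 + σ)‖ -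
        Real.exp (-(K / (2 * M))) * ‖zetaPow β (1 + (σ / 2 : ℝ))‖) := by
      nlinarith
    have b6 : A / 4 * K ^ (-β) * (1 / δ) ^ β = A / 4 / σ ^ β := by
      rw [hσ, Real.mul_rpow hK0.le hδ.le, Real.rpow_neg hK0.le, one_div, Real.inv_rpow hδ.le]
      field_simp
    rw [b6, div_le_iff₀ hσb]
    linarith

lemma swap_lemma {ι U : Type*} [Fintype ι] [MeasurableSpace U] {ρ : Measure U}
    [IsFiniteMeasure ρ] {α δ : ℝ} (hα : 1 < α) (hδ : 0 < δ) (φ : ι → U → ℝ)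
    (hφ : ∀ i, Measurable (φ i)) (g : U → ℂ) (hg : Integrable g ρ) :
    Integrable (fun u => (∏ i, ((2 * Real.pi / Real.Gamma α * gfun α δ (φ i u) : ℝ) : ℂ)) * g u) ρ ∧
    ∫ t : ι → ℝ, ∫ u, (∏ i, Complex.exp ((t i * φ i u : ℝ) * I) *
        ((δ : ℂ) + t i * I) ^ (-(α : ℂ))) * g u ∂ρ =
      ∫ u, (∏ i, ((2 * Real.pi / Real.Gamma α * gfun α δ (φ i u) : ℝ) : ℂ)) * g u ∂ρ := by
  have hW : Integrable (fun t : ι → ℝ => ∏ i, ((δ : ℂ) + t i * I) ^ (-(α : ℂ))) :=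
    Integrable.fintype_prod (μ := fun _ => volume) (fun _ => wint hα hδ)
  have h1 := hW.mul_prod hg
  have hP : Integrable (Function.uncurry fun (t : ι → ℝ) (u : U) =>
      (∏ i, Complex.exp ((t i * φ i u : ℝ) * I) *
        ((δ : ℂ) + t i * I) ^ (-(α : ℂ))) * g u) ((volume : Measure (ι → ℝ)).prod ρ) := by
    have h2 := h1.bdd_mul (c := 1)
      (f := fun z : (ι → ℝ) × U => ∏ i, Complex.exp ((z.1 i * φ i z.2 : ℝ) * I)) (by
        refine Measurable.aestronglyMeasurable ?_
        refine Finset.measurable_prod _ fun i _ => ?_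
        have : Measurable fun z : (ι → ℝ) × U => φ i z.2 := (hφ i).comp measurable_snd
        have h' : Measurable fun z : (ι → ℝ) × U => z.1 i * φ i z.2 :=
          ((measurable_pi_apply i).comp measurable_fst).mul this
        exact Complex.measurable_exp.comp ((Complex.measurable_ofReal.comp h').mul_const _))
      (Filter.Eventually.of_forall fun z => by
        rw [norm_prod]
        simp only [Complex.norm_exp_ofReal_mul_I, Finset.prod_const_one, le_refl])
    refine h2.congr (Filter.Eventually.of_forall fun z => ?_)
    simp only [Function.uncurry, Finset.prod_mul_distrib]
    ring
  have hinner : ∀ u, ∫ t : ι → ℝ, (∏ i, Complex.exp ((t i * φ i u : ℝ) * I) *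
        ((δ : ℂ) + t i * I) ^ (-(α : ℂ))) * g u =
      (∏ i, ((2 * Real.pi / Real.Gamma α * gfun α δ (φ i u) : ℝ) : ℂ)) * g u := by
    intro u
    rw [integral_mul_const]
    congr 1
    rw [integral_fintype_prod_volume_eq_prod (f := fun i (x : ℝ) =>
      Complex.exp ((x * φ i u : ℝ) * I) * ((δ : ℂ) + x * I) ^ (-(α : ℂ)))]
    exact Finset.prod_congr rfl fun i _ => ginv hα hδ _
  constructor
  · have := hP.integral_prod_right
    refine this.congr (Filter.Eventually.of_forall fun u => ?_)
    exact hinner u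
  · rw [integral_integral_swap hP]
    exact integral_congr_ae (Filter.Eventually.of_forall hinner)

lemma main_identity {α β δ ℓ y : ℝ} (hα : 1 < α) (hδ : 0 < δ) (hy : 0 < y)
    (hℓ : Real.log y = ℓ) (hℓδ : ℓ * δ = 1) (m : ℕ) (μ : Measure ℝ) [IsFiniteMeasure μ]
    (hμ : ∀ t : ℝ, ∫ u, Complex.exp (((-(t * u) : ℝ) : ℂ) * I) ∂μ
        = zetaPow β (1 + 2 * δ + t * I)) :
    ∃ Q : (Fin m × Fin m → ℝ) → ℝ, Q = (fun u =>
      (∏ i, (2 * Real.pi / Real.Gamma α * gfun α δ (ℓ - ∑ j, u (i, j)))) *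
      (∏ j, (2 * Real.pi / Real.Gamma α * gfun α δ (ℓ - ∑ i, u (i, j))))) ∧
      Integrable Q (Measure.pi (fun _ => μ)) ∧
    ∫ t₁ : Fin m → ℝ, ∫ t₂ : Fin m → ℝ,
          (∏ i : Fin m, ∏ j : Fin m,
            zetaPow β (1 + ((δ : ℂ) + t₁ i * Complex.I)
              + ((δ : ℂ) + t₂ j * Complex.I))) *
          (y : ℂ) ^ ((∑ i : Fin m, ((δ : ℂ) + t₁ i * Complex.I)) +
            ∑ j : Fin m, ((δ : ℂ) + t₂ j * Complex.I)) /
          ((∏ i : Fin m, ((δ : ℂ) + t₁ i * Complex.I) ^ (α : ℂ)) *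
            ∏ j : Fin m, ((δ : ℂ) + t₂ j * Complex.I) ^ (α : ℂ)) =
      ((Real.exp (2 * m) * ∫ u, Q u ∂(Measure.pi (fun _ => μ)) : ℝ) : ℂ) := by
  set ρ : Measure (Fin m × Fin m → ℝ) := Measure.pi (fun _ => μ) with hρ
  set R : Fin m → (Fin m × Fin m → ℝ) → ℝ := fun i u => ℓ - ∑ j, u (i, j) with hR
  set C : Fin m → (Fin m × Fin m → ℝ) → ℝ := fun j u => ℓ - ∑ i, u (i, j) with hC
  have hRm : ∀ i, Measurable (R i) := fun i => by simp only [hR]; fun_prop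
  have hCm : ∀ i, Measurable (C i) := fun i => by simp only [hC]; fun_prop
  set W : ℝ → ℂ := fun t => ((δ : ℂ) + t * I) ^ (-(α : ℂ)) with hW
  set P1 : (Fin m → ℝ) → (Fin m × Fin m → ℝ) → ℂ := fun t u =>
    ∏ i, Complex.exp ((t i * R i u : ℝ) * I) * W (t i) with hP1
  set P2 : (Fin m → ℝ) → (Fin m × Fin m → ℝ) → ℂ := fun t u =>
    ∏ i, Complex.exp ((t i * C i u : ℝ) * I) * W (t i) with hP2
  -- pointwise
  have hpt : ∀ t₁ t₂ : Fin m → ℝ, (∏ i : Fin m, ∏ j : Fin m,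
            zetaPow β (1 + ((δ : ℂ) + t₁ i * Complex.I)
              + ((δ : ℂ) + t₂ j * Complex.I))) *
          (y : ℂ) ^ ((∑ i : Fin m, ((δ : ℂ) + t₁ i * Complex.I)) +
            ∑ j : Fin m, ((δ : ℂ) + t₂ j * Complex.I)) /
          ((∏ i : Fin m, ((δ : ℂ) + t₁ i * Complex.I) ^ (α : ℂ)) *
            ∏ j : Fin m, ((δ : ℂ) + t₂ j * Complex.I) ^ (α : ℂ)) =
      (Real.exp (2 * m) : ℂ) * ∫ u, P2 t₂ u * P1 t₁ u ∂ρ := by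
    intro t₁ t₂
    have e1 : (∏ i : Fin m, ∏ j : Fin m, zetaPow β (1 + ((δ : ℂ) + t₁ i * Complex.I)
              + ((δ : ℂ) + t₂ j * Complex.I))) =
        ∫ u : Fin m × Fin m → ℝ, ∏ p : Fin m × Fin m,
          Complex.exp (((-((t₁ p.1 + t₂ p.2) * u p) : ℝ) : ℂ) * I) ∂ρ := by
      rw [integral_fintype_prod_eq_prod (f := fun (p : Fin m × Fin m) (x : ℝ) =>
        Complex.exp (((-((t₁ p.1 + t₂ p.2) * x) : ℝ) : ℂ) * I)), Fintype.prod_prod_type]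
      refine Finset.prod_congr rfl fun i _ => Finset.prod_congr rfl fun j _ => ?_
      rw [hμ]
      congr 1
      push_cast
      ring
    have e2 : (y : ℂ) ^ ((∑ i : Fin m, ((δ : ℂ) + t₁ i * Complex.I)) +
            ∑ j : Fin m, ((δ : ℂ) + t₂ j * Complex.I)) =
        (Real.exp (2 * m) : ℂ) * Complex.exp ((((∑ i, t₁ i * ℓ) + ∑ j, t₂ j * ℓ : ℝ) : ℂ) * I) := by
      rw [Complex.cpow_def_of_ne_zero (by exact_mod_cast hy.ne'), ← Complex.ofReal_log hy.le, hℓ,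
        Complex.ofReal_exp, ← Complex.exp_add]
      congr 1
      have hc : (ℓ : ℂ) * δ = 1 := by exact_mod_cast hℓδ
      simp only [Finset.sum_add_distrib, ← Finset.sum_mul]
      push_cast
      simp only [Finset.sum_const, Finset.card_univ, Fintype.card_fin, nsmul_eq_mul]
      linear_combination (2 * m : ℂ) * hc
    have e3 : ∀ t : Fin m → ℝ, (∏ i : Fin m, ((δ : ℂ) + t i * Complex.I) ^ (α : ℂ))⁻¹ =
        ∏ i, W (t i) := by
      intro t
      rw [← Finset.prod_inv_distrib]
      refine Finset.prod_congr rfl fun i _ => ?_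
      rw [hW]
      simp only [Complex.cpow_neg]
    rw [div_eq_mul_inv, mul_inv, e3, e3, e2, e1, ← integral_const_mul]
    rw [← integral_mul_const, ← integral_mul_const]
    refine integral_congr_ae (Filter.Eventually.of_forall fun u => ?_)
    simp only [hP1, hP2, Finset.prod_mul_distrib, ← Complex.exp_sum]
    have e4 : (∑ p : Fin m × Fin m, (((-((t₁ p.1 + t₂ p.2) * u p) : ℝ) : ℂ) * I)) +
        ((((∑ i, t₁ i * ℓ) + ∑ j, t₂ j * ℓ : ℝ) : ℂ) * I) =
        (∑ i, ((t₂ i * C i u : ℝ) : ℂ) * I) + ∑ i, ((t₁ i * R i u : ℝ) : ℂ) * I := by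
      simp only [← Finset.sum_mul, ← Complex.ofReal_sum, ← add_mul, ← Complex.ofReal_add]
      congr 2
      have r1 : ∑ p : Fin m × Fin m, -((t₁ p.1 + t₂ p.2) * u p) =
          - (∑ i, t₁ i * ∑ j, u (i, j)) - ∑ j, t₂ j * ∑ i, u (i, j) := by
        have : ∀ p : Fin m × Fin m, -((t₁ p.1 + t₂ p.2) * u p) =
          -(t₁ p.1 * u p) - t₂ p.2 * u p := fun p => by ring
        simp only [this, Finset.sum_sub_distrib, Finset.sum_neg_distrib]
        rw [Fintype.sum_prod_type, Fintype.sum_prod_type_right]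
        simp only [Finset.mul_sum]
      rw [r1]
      simp only [hR, hC, mul_sub, Finset.sum_sub_distrib, ← Finset.sum_mul]
      ring
    have e5 := congrArg Complex.exp e4
    rw [Complex.exp_add, Complex.exp_add] at e5
    linear_combination ((Real.exp (2 * m) : ℂ) * (∏ i, W (t₁ i)) * ∏ i, W (t₂ i)) * e5
  have hint1 : ∀ t, Integrable (P1 t) ρ := by
    intro t
    refine Integrable.of_bound (C := ∏ i, ‖W (t i)‖) ?_ ?_
    · refine Measurable.aestronglyMeasurable ?_
      refine Finset.measurable_prod _ fun i _ => ?_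
      refine Measurable.mul_const ?_ _
      exact Complex.measurable_exp.comp ((Complex.measurable_ofReal.comp
        ((hRm i).const_mul (t i))).mul_const _)
    · refine Filter.Eventually.of_forall fun u => ?_
      simp only [hP1, norm_prod, norm_mul, Complex.norm_exp_ofReal_mul_I, one_mul, le_refl]
  have s2 : ∀ t₁, ∫ t₂ : Fin m → ℝ, ∫ u, P2 t₂ u * P1 t₁ u ∂ρ = _ := fun t₁ =>
    (swap_lemma hα hδ C hCm (P1 t₁) (hint1 t₁)).2
  have s0 := (swap_lemma hα hδ C hCm (fun _ => (1:ℂ)) (integrable_const (μ := ρ) 1)).1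
  simp only [mul_one] at s0
  have s1 := swap_lemma hα hδ R hRm _ s0
  refine ⟨_, rfl, ?_, ?_⟩
  · have := s1.1.re
    refine this.congr (Filter.Eventually.of_forall fun u => ?_)
    simp only [← Complex.ofReal_prod, ← Complex.ofReal_mul]
    rfl
  · simp_rw [hpt, integral_const_mul, s2]
    rw [Complex.ofReal_mul]
    congr 1
    rw [← integral_complex_ofReal]
    have : ∀ t₁ : Fin m → ℝ, ∫ u, (∏ i, ((2 * Real.pi / Real.Gamma α * gfun α δ (C i u) : ℝ) : ℂ)) *
        P1 t₁ u ∂ρ = ∫ u, P1 t₁ u * (∏ i, ((2 * Real.pi / Real.Gamma α * gfun α δ (C i u) : ℝ) : ℂ))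
          ∂ρ := fun t₁ => by simp_rw [mul_comm]
    simp_rw [this]
    rw [s1.2]
    refine integral_congr_ae (Filter.Eventually.of_forall fun u => ?_)
    simp only [← Complex.ofReal_prod, ← Complex.ofReal_mul]
    rfl

/-- **Lower bound for a positive-power `ζ` integral (Lemma 5 of Chandee–Li).**
For real `α > 2`, `β > 0` and `m ≥ 1` there are `c > 0` and `y₀ > 2` such that for all
`y ≥ y₀` the iterated integral
`I = (1/2πi)^{2m} ∫_{(1/log y)^{2m}} ∏_{i,j≤m} ζ^β(1+z_i+z_{m+j}) · y^{z₁+⋯+z_{2m}}/(z₁^α⋯z_{2m}^α) dz⃗`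
is real and satisfies `I ≥ c (log y)^{2mα + m²β − 2m}`. -/
theorem zeta_integral_lower_bound (α β : ℝ) (hα : 2 < α) (hβ : 0 < β)
    (m : ℕ) (hm : 1 ≤ m) :
    ∃ c y₀ : ℝ, 0 < c ∧ 2 < y₀ ∧ ∀ y : ℝ, y₀ ≤ y →
      (fun I : ℂ =>
        I.im = 0 ∧
        c * Real.log y ^ (2 * (m : ℝ) * α + (m : ℝ) ^ 2 * β - 2 * (m : ℝ)) ≤ I.re)
      (((1 / (2 * Real.pi)) ^ (2 * m) : ℝ) *
        ∫ t₁ : Fin m → ℝ, ∫ t₂ : Fin m → ℝ,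
          (∏ i : Fin m, ∏ j : Fin m,
            zetaPow β (1 + (((1 / Real.log y : ℝ) : ℂ) + t₁ i * Complex.I)
              + (((1 / Real.log y : ℝ) : ℂ) + t₂ j * Complex.I))) *
          (y : ℂ) ^ ((∑ i : Fin m, (((1 / Real.log y : ℝ) : ℂ) + t₁ i * Complex.I)) +
            ∑ j : Fin m, (((1 / Real.log y : ℝ) : ℂ) + t₂ j * Complex.I)) /
          ((∏ i : Fin m, (((1 / Real.log y : ℝ) : ℂ) + t₁ i * Complex.I) ^ (α : ℂ)) *
            ∏ j : Fin m, (((1 / Real.log y : ℝ) : ℂ) + t₂ j * Complex.I) ^ (α : ℂ))) := by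
  obtain ⟨c, D, hc, hD, hmeas⟩ := exists_measure hβ (2 * m) (by positivity)
  have hG : 0 < Real.Gamma α := Real.Gamma_pos_of_pos (by linarith)
  have hpi := Real.pi_pos
  set κ : ℝ := 2 * Real.pi / Real.Gamma α * ((1 / 2) ^ (α - 1) * Real.exp (-1)) with hκ
  have hκ0 : 0 < κ := by positivity
  refine ⟨(1 / (2 * Real.pi)) ^ (2 * m) * (Real.exp (2 * m) * (κ ^ (2 * m) * c ^ (m * m))),
    max 3 (Real.exp (1 / D) + 1), by positivity, lt_max_of_lt_left (by norm_num), ?_⟩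
  intro y hy
  have hy3 : 3 ≤ y := le_trans (le_max_left _ _) hy
  have hyD : Real.exp (1 / D) < y := by
    have := le_trans (le_max_right _ _) hy
    linarith
  have hy0 : 0 < y := by linarith
  set ℓ := Real.log y with hℓ
  have hℓD : 1 / D < ℓ := (Real.lt_log_iff_exp_lt hy0).2 hyD
  have hℓ0 : 0 < ℓ := lt_trans (by positivity) hℓD
  set δ := 1 / ℓ with hδ
  have hδ0 : 0 < δ := by positivity
  have hℓδ : ℓ * δ = 1 := by rw [hδ]; field_simp
  have hδD : δ < D := by
    rw [hδ, div_lt_iff₀ hℓ0]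
    rw [div_lt_iff₀ hD] at hℓD
    linarith
  obtain ⟨μ, hfin, hμ, hlow⟩ := hmeas δ hδ0 hδD
  obtain ⟨Q, hQ, hQi, hQe⟩ := main_identity (α := α) (by linarith) hδ0 hy0 hℓ.symm hℓδ m μ hμ
  rw [hQe, ← Complex.ofReal_mul]
  refine ⟨Complex.ofReal_im _, ?_⟩
  rw [Complex.ofReal_re]
  have hQ0 : ∀ u, 0 ≤ Q u := by
    intro u
    rw [hQ]
    have := fun v => gfun_nonneg α δ v
    exact mul_nonneg (Finset.prod_nonneg fun i _ => mul_nonneg (by positivity) (this _))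
      (Finset.prod_nonneg fun i _ => mul_nonneg (by positivity) (this _))
  set S : Set (Fin m × Fin m → ℝ) := Set.univ.pi (fun _ => Set.Icc 0 (1 / (2 * m * δ))) with hS
  have hSm : MeasurableSet S := MeasurableSet.univ_pi (fun _ => measurableSet_Icc)
  have hm0 : (0:ℝ) < m := by exact_mod_cast hm
  have hX : 1 / (2 * m * δ) = ℓ / (2 * m) := by
    rw [hδ]; field_simp
  have hg : ∀ v : Fin m → ℝ, (∀ i, v i ∈ Set.Icc 0 (1 / (2 * m * δ))) →
      κ * ℓ ^ (α - 1) ≤ 2 * Real.pi / Real.Gamma α * gfun α δ (ℓ - ∑ i, v i) := by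
    intro v hv
    have h0 : 0 ≤ ∑ i, v i := Finset.sum_nonneg fun i _ => (hv i).1
    have h1 : ∑ i, v i ≤ ℓ / 2 := by
      calc ∑ i, v i ≤ ∑ _i : Fin m, ℓ / (2 * m) :=
            Finset.sum_le_sum fun i _ => hX ▸ (hv i).2
        _ = ℓ / 2 := by
            simp only [Finset.sum_const, Finset.card_univ, Fintype.card_fin, nsmul_eq_mul]
            field_simp
    rw [gfun, if_pos (by linarith), hκ, mul_assoc]
    refine mul_le_mul_of_nonneg_left ?_ (by positivity)
    have h2 : (1 / 2 * ℓ) ^ (α - 1) ≤ (ℓ - ∑ i, v i) ^ (α - 1) :=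
      Real.rpow_le_rpow (by positivity) (by linarith) (by linarith)
    have h3 : Real.exp (-1) ≤ Real.exp (-δ * (ℓ - ∑ i, v i)) := by
      apply Real.exp_le_exp.2
      nlinarith
    rw [mul_right_comm, ← Real.mul_rpow (by norm_num) hℓ0.le]
    exact mul_le_mul h2 h3 (Real.exp_pos _).le (Real.rpow_nonneg (by linarith) _)
  have hQS : ∀ u ∈ S, (κ * ℓ ^ (α - 1)) ^ (2 * m) ≤ Q u := by
    intro u hu
    have hu' : ∀ p, u p ∈ Set.Icc 0 (1 / (2 * m * δ)) := fun p => hu p (Set.mem_univ _)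
    have hb : 0 ≤ κ * ℓ ^ (α - 1) := by positivity
    rw [hQ, two_mul m, pow_add]
    have hcard : (κ * ℓ ^ (α - 1)) ^ m = ∏ _i : Fin m, (κ * ℓ ^ (α - 1)) := by simp
    rw [hcard]
    refine mul_le_mul
      (Finset.prod_le_prod (fun _ _ => hb) fun i _ => hg (fun j => u (i, j)) fun j => hu' _)
      (Finset.prod_le_prod (fun _ _ => hb) fun j _ => hg (fun i => u (i, j)) fun i => hu' _)
      (Finset.prod_nonneg fun _ _ => hb) ?_
    exact Finset.prod_nonneg fun i _ => mul_nonneg (by positivity) (gfun_nonneg _ _ _)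
  have hρS : (Measure.pi (fun _ : Fin m × Fin m => μ)).real S =
      (μ.real (Set.Icc 0 (1 / (2 * m * δ)))) ^ (m * m) := by
    rw [Measure.real, hS, Measure.pi_pi, ENNReal.toReal_prod]
    simp [Measure.real]
  have hI : (κ * ℓ ^ (α - 1)) ^ (2 * m) * (c * ℓ ^ β) ^ (m * m) ≤
      ∫ u, Q u ∂(Measure.pi (fun _ : Fin m × Fin m => μ)) := by
    calc (κ * ℓ ^ (α - 1)) ^ (2 * m) * (c * ℓ ^ β) ^ (m * m)
        ≤ (κ * ℓ ^ (α - 1)) ^ (2 * m) * (Measure.pi (fun _ : Fin m × Fin m => μ)).real S := by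
          refine mul_le_mul_of_nonneg_left ?_ (by positivity)
          rw [hρS]
          refine pow_le_pow_left₀ (by positivity) ?_ _
          have : 1 / δ = ℓ := by rw [hδ]; field_simp
          rwa [this] at hlow
      _ = ∫ u in S, (κ * ℓ ^ (α - 1)) ^ (2 * m) ∂(Measure.pi (fun _ : Fin m × Fin m => μ)) := by
          rw [setIntegral_const, smul_eq_mul, mul_comm]
      _ ≤ ∫ u in S, Q u ∂(Measure.pi (fun _ : Fin m × Fin m => μ)) :=
          setIntegral_mono_on (integrable_const _).integrableOn hQi.integrableOn hSm hQS
      _ ≤ _ := setIntegral_le_integral hQi (Filter.Eventually.of_forall hQ0)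
  have hpow : ℓ ^ (2 * (m : ℝ) * α + (m : ℝ) ^ 2 * β - 2 * (m : ℝ)) =
      (ℓ ^ (α - 1)) ^ (2 * m) * (ℓ ^ β) ^ (m * m) := by
    rw [← Real.rpow_natCast (ℓ ^ (α - 1)), ← Real.rpow_natCast (ℓ ^ β), ← Real.rpow_mul hℓ0.le, ← Real.rpow_mul hℓ0.le,
      ← Real.rpow_add hℓ0]
    congr 1
    push_cast
    ring
  rw [hpow]
  have hfac : 0 ≤ (1 / (2 * Real.pi)) ^ (2 * m) * Real.exp (2 * m) := by positivity
  have := mul_le_mul_of_nonneg_left hI hfac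
  rw [mul_pow, mul_pow] at this
  refine le_trans (le_of_eq ?_) (le_trans this (le_of_eq ?_))
  · ring
  · ring
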